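/- There is C > 0 such that for every integer n ≥ 1 and all x, y ∈ [−2·n^{2/3}, ∞) with x ≠ y, x ≠ 0, y ≠ 0: |K_Aiⁿ(x,y)| ≤ C·Ĝ_{−1/4,1/4,1}(x,y), and the derivative of y ↦ K_Aiⁿ(x,y) satisfies |∂_y K_Aiⁿ(x,y)| ≤ C·(Ĝ_{−1/4,1/4,2}(x,y) + Ĝ_{−3/4,1/4,1}(x,y)). -/

import Mathlib

open MeasureTheory Filter Set

noncomputable section

/-- The Airy function `Ai(x) = (1/π)·lim_{b→∞} ∫_0^b cos(t³/3 + x·t) dt`. -/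
def Ai (x : ℝ) : ℝ :=
  (1 / Real.pi) *
    limUnder Filter.atTop (fun b : ℝ => ∫ t in (0:ℝ)..b, Real.cos (t ^ 3 / 3 + x * t))

/-- The Airy kernel. -/
def KAi (x y : ℝ) : ℝ :=
  if x = y then (deriv Ai x) ^ 2 - x * (Ai x) ^ 2
  else (Ai x * deriv Ai y - deriv Ai x * Ai y) / (x - y)

/-- One-point correlation function of the Airy₂ random point field. -/
def rho (x : ℝ) : ℝ := (deriv Ai x) ^ 2 - x * (Ai x) ^ 2

/-- Probabilists' Hermite polynomial `Ĥ_m(x) = (−1)^m e^{x²/2} (d/dx)^m e^{−x²/2}`. -/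
def hermiteP (m : ℕ) (x : ℝ) : ℝ :=
  (-1 : ℝ) ^ m * Real.exp (x ^ 2 / 2) * iteratedDeriv m (fun t => Real.exp (-t ^ 2 / 2)) x

/-- Normalized oscillator function `φ_m`. -/
def osc (m : ℕ) (x : ℝ) : ℝ :=
  (2 * Real.pi) ^ (-(1:ℝ)/4) * ((m.factorial : ℝ)) ^ (-(1:ℝ)/2) *
    Real.exp (-x ^ 2 / 4) * hermiteP m x

/-- `ψ_mⁿ(x) = n^{1/12}·φ_m(2√n + n^{−1/6}·x)`. -/
def psiUp (n m : ℕ) (x : ℝ) : ℝ :=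
  (n : ℝ) ^ ((1:ℝ)/12) * osc m (2 * Real.sqrt n + (n : ℝ) ^ (-(1:ℝ)/6) * x)

/-- `ψ_n = ψ_nⁿ`. -/
def psiN (n : ℕ) : ℝ → ℝ := psiUp n n

/-- The finite-`n` Airy kernel. -/
def KAiN (n : ℕ) (x y : ℝ) : ℝ :=
  if x = y then
    (deriv (psiN n) x) ^ 2 - psiN n x * deriv (deriv (psiN n)) x
      - (1 / (2 * (n : ℝ) ^ ((1:ℝ)/3))) * (psiN n x) ^ 2
  else
    (psiN n x * deriv (psiN n) y - deriv (psiN n) x * psiN n y) / (x - y)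
      - (1 / (2 * (n : ℝ) ^ ((1:ℝ)/3))) * (psiN n x * psiN n y)

/-- `(εf)(x) = (1/2)·∫_ℝ sign(x − y)·f(y) dy`. -/
def epsF (f : ℝ → ℝ) (x : ℝ) : ℝ := (1/2) * ∫ y : ℝ, Real.sign (x - y) * f y

/-- `εψ_n`. -/
def epsPsi (n : ℕ) : ℝ → ℝ := epsF (psiN n)

/-- `J₁(x,y) = K_Ai(x,y) + (1/2)·Ai(x)·(1 − ∫_y^∞ Ai(u) du)`. -/
def J1 (x y : ℝ) : ℝ := KAi x y + (1/2) * Ai x * (1 - ∫ u in Set.Ioi y, Ai u)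

/-- Scalar part of the quaternion product of Airy₁ kernels. -/
def L1 (x y : ℝ) : ℝ :=
  J1 x y * J1 y x -
    deriv (fun v => J1 x v) y * ((∫ u in x..y, J1 u x) - (1/2) * Real.sign (y - x))

/-- `J₁ⁿ(x,y) = K_Aiⁿ(x,y) + (1/2)·ψ_{n−1}ⁿ(x)·(εψ_n)(y)`. -/
def J1N (n : ℕ) (x y : ℝ) : ℝ :=
  KAiN n x y + (1/2) * psiUp n (n - 1) x * epsPsi n y

/-- Scalar part of the quaternion product of finite-`n` Airy₁ kernels. -/
def L1N (n : ℕ) (x y : ℝ) : ℝ :=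
  J1N n x y * J1N n y x -
    deriv (fun v => J1N n x v) y * ((∫ u in x..y, J1N n u x) - (1/2) * Real.sign (y - x))

/-- `ρ̂(x) = (1/π)·√(−x)` for `x < 0`, and `0` otherwise. -/
def rhoHat (x : ℝ) : ℝ := if x < 0 then Real.sqrt (-x) / Real.pi else 0

/-- `ρ̂ⁿ(x) = (1/π)·√(−x·(1 + x/(4·n^{2/3})))` on `(−4n^{2/3}, 0)`, and `0` otherwise. -/
def rhoHatN (n : ℕ) (x : ℝ) : ℝ :=
  if -(4 * (n : ℝ) ^ ((2:ℝ)/3)) < x ∧ x < 0 then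
    Real.sqrt (-x * (1 + x / (4 * (n : ℝ) ^ ((2:ℝ)/3)))) / Real.pi
  else 0

/-- `G_{a,b,c}(x,y) = |x|^{−a}·|y|^{−b}·|x−y|^{−c}`. -/
def Gf (a b c : ℝ) (x y : ℝ) : ℝ := |x| ^ (-a) * |y| ^ (-b) * |x - y| ^ (-c)

/-- `Ĝ_{a,b,c}(x,y) = G_{a,b,c}(x,y) + G_{a,b,c}(y,x)`. -/
def Ghat (a b c : ℝ) (x y : ℝ) : ℝ := Gf a b c x y + Gf a b c y x

/-- Soft-edge one-point correlation function of the `n`-point GUE ensemble. -/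
def rhoN (n : ℕ) (x : ℝ) : ℝ :=
  (deriv (psiN n) x) ^ 2 - (x ^ 2 / (4 * (n : ℝ) ^ ((2:ℝ)/3)) + x) * (psiN n x) ^ 2

end


theorem core_lower (h : ℝ) (h0 : 0 < h) (h1 : h ≤ 1) (f D : ℝ → ℝ)
    (hf : ∀ x, HasDerivAt f (D x) x)
    (hD : ∀ x, HasDerivAt D ((x + h^2*x^2/4 - h/2) * f x) x)
    (i0 : f (-(2/h^2)) ^ 2 ≤ h) (i1 : D (-(2/h^2)) ^ 2 ≤ 1/h)
    (x : ℝ) (hx : -(2/h^2) ≤ x) (hx2 : x ≤ -2) :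
    Real.sqrt (h/2 - x - h^2*x^2/4) * f x ^ 2
      + D x ^ 2 / Real.sqrt (h/2 - x - h^2*x^2/4) ≤ 8 := by
  set q : ℝ → ℝ := fun x => h/2 - x - h^2*x^2/4 with hq
  set r : ℝ → ℝ := fun x => Real.sqrt (q x) with hr
  set s : ℝ → ℝ := fun x => -1 - h^2*x/2 with hs
  set g : ℝ → ℝ := fun x => s x / (2 * r x ^ 3) with hg
  set F : ℝ → ℝ := fun x => r x * f x ^ 2 + D x ^ 2 / r x + g x * (f x * D x) with hF
  have hx0 : -(2/h^2) ≤ -2 := hx.trans hx2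
  have key : ∀ x ∈ Icc (-(2/h^2)) (-2), 1 ≤ q x ∧ -1 ≤ s x ∧ s x ≤ 0 := by
    intro x ⟨ha, hb⟩
    have : -2 ≤ h^2 * x := by
      have := mul_le_mul_of_nonneg_left ha (sq_nonneg h)
      have e : h^2 * -(2/h^2) = -2 := by field_simp
      linarith
    simp only [hq, hs]
    refine ⟨?_, ?_, ?_⟩
    · nlinarith
    · nlinarith [sq_nonneg h]
    · linarith
  have rpos : ∀ x ∈ Icc (-(2/h^2)) (-2), 1 ≤ r x ∧ r x ^ 2 = q x := by
    intro x hx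
    have := (key x hx).1
    exact ⟨by simp only [hr]; rwa [Real.one_le_sqrt], Real.sq_sqrt (by linarith)⟩
  have gb : ∀ x ∈ Icc (-(2/h^2)) (-2), -(1/2) ≤ g x ∧ g x ≤ 0 := by
    intro x hx
    obtain ⟨h1, h2, h3⟩ := key x hx
    obtain ⟨h4, h5⟩ := rpos x hx
    have h6 : 1 ≤ r x ^ 3 := one_le_pow₀ h4
    simp only [hg]
    constructor
    · rw [le_div_iff₀ (by positivity)]; linarith
    · apply div_nonpos_of_nonpos_of_nonneg h3; positivity
  have am : ∀ x ∈ Icc (-(2/h^2)) (-2), |f x * D x| ≤ (r x * f x ^ 2 + D x ^ 2 / r x)/2 := by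
    intro x hx
    obtain ⟨h4, h5⟩ := rpos x hx
    have h6 : 0 < r x := by linarith
    rw [abs_le]
    have e : r x * f x ^ 2 + D x ^ 2 / r x = ((r x * f x)^2 + D x ^ 2) / r x := by field_simp
    rw [e]
    constructor
    · rw [div_div, neg_le, neg_le_iff_add_nonneg, ← sub_nonneg]
      have : ((r x * f x)^2 + D x ^ 2) / (r x * 2) + f x * D x - 0 = (r x * f x + D x)^2 / (r x * 2) := by
        field_simp; ring
      rw [this]; positivity
    · rw [div_div, le_div_iff₀ (by positivity)]
      nlinarith [sq_nonneg (r x * f x - D x)]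
  have Fb : ∀ x ∈ Icc (-(2/h^2)) (-2), (3/4) * (r x * f x ^ 2 + D x ^ 2 / r x) ≤ F x := by
    intro x hx
    have h1 := am x hx
    obtain ⟨h2, h3⟩ := gb x hx
    have : |g x * (f x * D x)| ≤ (1/2) * ((r x * f x ^ 2 + D x ^ 2 / r x)/2) := by
      rw [abs_mul]
      exact mul_le_mul (by rw [abs_le]; constructor <;> linarith) h1 (abs_nonneg _) (by norm_num)
    have := (abs_le.1 this).1
    simp only [hF]
    linarith
  have hsd : ∀ x, HasDerivAt s (-h^2/2) x := by
    intro x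
    have := (((hasDerivAt_id x).const_mul (h^2)).div_const 2).const_sub (-1)
    refine HasDerivAt.congr_deriv (this) ?_
    simp; ring
  have hqd : ∀ x, HasDerivAt q (s x) x := by
    intro x
    have := (((hasDerivAt_id x).const_sub (h/2)).sub ((((hasDerivAt_id x).pow 2).const_mul (h^2)).div_const 4))
    refine HasDerivAt.congr_deriv (this) ?_
    simp [hs]; ring
  have hrd : ∀ x ∈ Icc (-(2/h^2)) (-2), HasDerivAt r (s x / (2 * r x)) x := by
    intro x hx
    exact (hqd x).sqrt (by linarith [(key x hx).1])
  have hgd : ∀ x ∈ Icc (-(2/h^2)) (-2),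
      HasDerivAt g (-h^2/(4 * r x^3) - 3 * s x^2/(4 * r x ^ 5)) x := by
    intro x hx
    have hp : 0 < r x := by linarith [(rpos x hx).1]
    have := (hsd x).div (((hrd x hx).pow 3).const_mul 2) (by simp; positivity)
    refine HasDerivAt.congr_deriv (this) ?_
    simp
    field_simp
    ring
  have hFd : ∀ x ∈ Icc (-(2/h^2)) (-2),
      HasDerivAt F ((-h^2/(4 * r x^3) - 3 * s x^2/(4 * r x ^ 5)) * (f x * D x)) x := by
    intro x hx
    have hp : 0 < r x := by linarith [(rpos x hx).1]
    have e := (rpos x hx).2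
    have := (((hrd x hx).mul ((hf x).pow 2)).add (((hD x).pow 2).div (hrd x hx) hp.ne')).add
      ((hgd x hx).mul ((hf x).mul (hD x)))
    refine HasDerivAt.congr_deriv (this) ?_
    have e2 : x + h^2*x^2/4 - h/2 = - r x ^ 2 := by rw [e]; simp only [hq]; ring
    rw [e2]
    simp [hg]
    field_simp
    ring
  have anti : AntitoneOn (fun x => F x * Real.exp (2/3 * g x)) (Icc (-(2/h^2)) (-2)) := by
    have hd : ∀ x ∈ Icc (-(2/h^2)) (-2), HasDerivAt (fun x => F x * Real.exp (2/3 * g x))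
       ((-h^2/(4 * r x^3) - 3 * s x^2/(4 * r x ^ 5)) * (f x * D x + 2/3 * F x) * Real.exp (2/3 * g x)) x := by
      intro x hx
      refine HasDerivAt.congr_deriv ((hFd x hx).mul (((hgd x hx).const_mul (2/3)).exp)) ?_
      ring
    apply antitoneOn_of_deriv_nonpos (convex_Icc _ _)
    · exact fun x hx => (hd x hx).continuousAt.continuousWithinAt
    · intro x hx
      exact (hd x (interior_subset hx)).differentiableAt.differentiableWithinAt
    · intro x hx
      have hx := interior_subset hx
      rw [(hd x hx).deriv]
      have hp : 0 < r x := by linarith [(rpos x hx).1]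
      have h1 := (abs_le.1 (am x hx)).1
      have h2 := Fb x hx
      apply mul_nonpos_of_nonpos_of_nonneg _ (Real.exp_nonneg _)
      apply mul_nonpos_of_nonpos_of_nonneg
      · have : 0 ≤ h^2/(4 * r x^3) + 3 * s x^2/(4 * r x ^ 5) := by positivity
        have e : -h^2/(4 * r x^3) = - (h^2/(4 * r x^3)) := by ring
        rw [e]; linarith
      · linarith
  have m0 : -(2/h^2) ∈ Icc (-(2/h^2)) (-2) := ⟨le_rfl, hx0⟩
  have mx : x ∈ Icc (-(2/h^2)) (-2) := ⟨hx, hx2⟩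
  have fin := anti m0 mx hx
  simp only at fin
  have s0 : s (-(2/h^2)) = 0 := by simp only [hs]; field_simp; ring
  have g0 : g (-(2/h^2)) = 0 := by simp only [hg]; rw [s0]; simp
  have q0 : q (-(2/h^2)) = 1/h^2 + h/2 := by simp only [hq]; field_simp; ring
  have rl : 1/h ≤ r (-(2/h^2)) := by
    simp only [hr]; apply Real.le_sqrt_of_sq_le; rw [q0, div_pow, one_pow]; linarith
  have ru : r (-(2/h^2)) ≤ 2/h := by
    simp only [hr]; rw [Real.sqrt_le_left (by positivity), q0]
    have : (2/h)^2 = 4 * (1/h^2) := by ring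
    rw [this]
    have : 1 ≤ 1/h^2 := by rw [le_div_iff₀ (by positivity)]; nlinarith
    linarith
  have F0 : F (-(2/h^2)) ≤ 3 := by
    simp only [hF]
    rw [g0]
    have hp : 0 < r (-(2/h^2)) := by linarith [(rpos _ m0).1]
    have a1 : r (-(2/h^2)) * f (-(2/h^2)) ^ 2 ≤ 2/h * h :=
      mul_le_mul ru i0 (sq_nonneg _) (by positivity)
    have a2 : D (-(2/h^2)) ^ 2 / r (-(2/h^2)) ≤ 1 := by
      rw [div_le_one hp]; linarith
    have : 2/h*h = 2 := by field_simp
    linarith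
  rw [g0] at fin
  simp only [mul_zero, Real.exp_zero, mul_one] at fin
  have e1 : 2/3 ≤ Real.exp (2/3 * g x) := by
    have := Real.add_one_le_exp (2/3 * g x)
    linarith [(gb x mx).1]
  have h2 := Fb x mx
  have hp : 0 < r x := by linarith [(rpos x mx).1]
  have Ep : 0 ≤ r x * f x ^ 2 + D x ^ 2 / r x := by positivity
  have : 2/3 * F x ≤ 3 := by
    have : F x * (2/3) ≤ F x * Real.exp (2/3 * g x) := mul_le_mul_of_nonneg_left e1 (by linarith)
    linarith
  show r x * f x ^ 2 + D x ^ 2 / r x ≤ 8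
  linarith

theorem core_mid (h : ℝ) (h0 : 0 < h) (h1 : h ≤ 1) (f D : ℝ → ℝ)
    (hf : ∀ x, HasDerivAt f (D x) x)
    (hD : ∀ x, HasDerivAt D ((x + h^2*x^2/4 - h/2) * f x) x)
    (x : ℝ) (hx : -2 ≤ x) (hx2 : x ≤ 3) :
    f x ^ 2 + D x ^ 2 ≤ (f (-2) ^ 2 + D (-2) ^ 2) * Real.exp 50 := by
  have hd : ∀ x, HasDerivAt (fun x => (f x ^ 2 + D x ^ 2) * Real.exp (-(10 * x)))
      ((2 * (1 + (x + h^2*x^2/4 - h/2)) * (f x * D x) - 10 * (f x ^ 2 + D x ^ 2)) * Real.exp (-(10 * x))) x := by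
    intro x
    refine HasDerivAt.congr_deriv ((((hf x).pow 2).add ((hD x).pow 2)).mul (((hasDerivAt_id x).const_mul 10).neg.exp)) ?_
    simp; ring
  have anti : AntitoneOn (fun x => (f x ^ 2 + D x ^ 2) * Real.exp (-(10 * x))) (Icc (-2) 3) := by
    apply antitoneOn_of_deriv_nonpos (convex_Icc _ _)
    · exact fun x hx => (hd x).continuousAt.continuousWithinAt
    · intro x hx
      exact (hd x).differentiableAt.differentiableWithinAt
    · intro x hx
      obtain ⟨ha, hb⟩ := interior_subset hx
      rw [(hd x).deriv]
      apply mul_nonpos_of_nonpos_of_nonneg _ (Real.exp_nonneg _)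
      have hh : h^2 * x^2 ≤ 1 * 9 := mul_le_mul (by nlinarith) (by nlinarith) (sq_nonneg _) (by norm_num)
      have hh0 : 0 ≤ h^2 * x^2 := by positivity
      have hP : |1 + (x + h^2*x^2/4 - h/2)| ≤ 10 := by rw [abs_le]; constructor <;> linarith
      have hfd : |f x * D x| ≤ (f x ^ 2 + D x ^ 2) / 2 := by
        rw [abs_le]; constructor <;> nlinarith [sq_nonneg (f x + D x), sq_nonneg (f x - D x)]
      have : |(1 + (x + h^2*x^2/4 - h/2)) * (f x * D x)| ≤ 10 * ((f x ^ 2 + D x ^ 2) / 2) := by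
        rw [abs_mul]; exact mul_le_mul hP hfd (abs_nonneg _) (by norm_num)
      linarith [(abs_le.1 this).2]
  have fin := anti ⟨le_rfl, by norm_num⟩ ⟨hx, hx2⟩ hx
  simp only at fin
  have p : 0 ≤ f x ^ 2 + D x ^ 2 := by positivity
  have p2 : 0 ≤ f (-2) ^ 2 + D (-2) ^ 2 := by positivity
  calc f x ^ 2 + D x ^ 2 = (f x ^ 2 + D x ^ 2) * Real.exp (-(10 * x)) * Real.exp (10 * x) := by
        rw [mul_assoc, ← Real.exp_add]; simp
    _ ≤ (f (-2) ^ 2 + D (-2) ^ 2) * Real.exp (-(10 * -2)) * Real.exp (10 * x) := by gcongr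
    _ = (f (-2) ^ 2 + D (-2) ^ 2) * Real.exp (20 + 10 * x) := by
        rw [mul_assoc, ← Real.exp_add]; norm_num
    _ ≤ _ := by gcongr; linarith

theorem core_upper (h : ℝ) (h0 : 0 < h) (h1 : h ≤ 1) (f D : ℝ → ℝ)
    (hf : ∀ x, HasDerivAt f (D x) x)
    (hD : ∀ x, HasDerivAt D ((x + h^2*x^2/4 - h/2) * f x) x)
    (t1 : Tendsto (fun x => f x * D x) atTop (nhds 0))
    (t2 : Tendsto (fun x => D x ^ 2 - (x + h^2*x^2/4 - h/2) * f x ^ 2) atTop (nhds 0)) :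
    (∀ x, 2 ≤ x → (x^2 * f x)^2 ≤ 16 * f 2 ^ 2) ∧
    (∀ x y, 2 ≤ x → x ≤ y → D y ^ 2 ≤ D x ^ 2) := by
  have P1 : ∀ x, 2 ≤ x → x / 2 ≤ x + h^2*x^2/4 - h/2 := by
    intro x hx
    have : 0 ≤ h^2*x^2 := by positivity
    linarith
  have d1 : ∀ x, HasDerivAt (fun x => f x * D x) (D x ^ 2 + (x + h^2*x^2/4 - h/2) * f x ^ 2) x := by
    intro x
    refine HasDerivAt.congr_deriv ((hf x).mul (hD x)) ?_
    ring
  have mono : MonotoneOn (fun x => f x * D x) (Ici 2) := by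
    apply monotoneOn_of_deriv_nonneg (convex_Ici _)
    · exact fun x hx => (d1 x).continuousAt.continuousWithinAt
    · exact fun x hx => (d1 x).differentiableAt.differentiableWithinAt
    · intro x hx
      have hx : 2 ≤ x := interior_subset hx
      rw [(d1 x).deriv]
      have := P1 x hx
      have : 0 ≤ x + h^2*x^2/4 - h/2 := by linarith
      positivity
  have neg : ∀ x, 2 ≤ x → f x * D x ≤ 0 := by
    intro x hx
    apply ge_of_tendsto t1
    filter_upwards [eventually_ge_atTop x] with y hy
    exact mono hx (le_trans hx hy) hy
  have d2 : ∀ x, HasDerivAt (fun x => D x ^ 2 - (x + h^2*x^2/4 - h/2) * f x ^ 2)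
      (-(1 + h^2*x/2) * f x ^ 2) x := by
    intro x
    have hP : HasDerivAt (fun x => x + h^2*x^2/4 - h/2) (1 + h^2*x/2) x := by
      refine HasDerivAt.congr_deriv (((hasDerivAt_id x).add ((((hasDerivAt_id x).pow 2).const_mul (h^2)).div_const 4)).sub_const (h/2)) ?_
      simp; ring
    refine HasDerivAt.congr_deriv (((hD x).pow 2).sub (hP.mul ((hf x).pow 2))) ?_
    simp; ring
  have anti2 : AntitoneOn (fun x => D x ^ 2 - (x + h^2*x^2/4 - h/2) * f x ^ 2) (Ici 2) := by
    apply antitoneOn_of_deriv_nonpos (convex_Ici _)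
    · exact fun x hx => (d2 x).continuousAt.continuousWithinAt
    · exact fun x hx => (d2 x).differentiableAt.differentiableWithinAt
    · intro x hx
      have hx : 2 ≤ x := interior_subset hx
      rw [(d2 x).deriv]
      have : 0 ≤ (1 + h^2*x/2) * f x ^ 2 := by positivity
      linarith
  have pos2 : ∀ x, 2 ≤ x → (x + h^2*x^2/4 - h/2) * f x ^ 2 ≤ D x ^ 2 := by
    intro x hx
    rw [← sub_nonneg]
    apply le_of_tendsto t2
    filter_upwards [eventually_ge_atTop x] with y hy
    exact anti2 hx (le_trans hx hy) hy
  have dom : ∀ x, 2 ≤ x → f x ^ 2 ≤ -(f x * D x) := by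
    intro x hx
    have a := pos2 x hx
    have b := P1 x hx
    have c : f x ^ 2 ≤ D x ^ 2 := by nlinarith [sq_nonneg (f x)]
    apply le_of_sq_le_sq _ (by linarith [neg x hx])
    nlinarith [sq_nonneg (f x)]
  have d3 : ∀ x, HasDerivAt (fun x => (x^2 * f x)^2) (2 * x^3 * (2 * f x^2 + x * (f x * D x))) x := by
    intro x
    refine HasDerivAt.congr_deriv ((((hasDerivAt_id x).pow 2).mul (hf x)).pow 2) ?_
    simp; ring
  have anti3 : AntitoneOn (fun x => (x^2 * f x)^2) (Ici 2) := by
    apply antitoneOn_of_deriv_nonpos (convex_Ici _)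
    · exact fun x hx => (d3 x).continuousAt.continuousWithinAt
    · exact fun x hx => (d3 x).differentiableAt.differentiableWithinAt
    · intro x hx
      have hx : 2 ≤ x := interior_subset hx
      rw [(d3 x).deriv]
      apply mul_nonpos_of_nonneg_of_nonpos (by positivity)
      have := dom x hx
      nlinarith [neg x hx]
  have d4 : ∀ x, HasDerivAt (fun x => D x ^ 2) (2 * (x + h^2*x^2/4 - h/2) * (f x * D x)) x := by
    intro x
    refine HasDerivAt.congr_deriv ((hD x).pow 2) ?_
    simp; ring
  have anti4 : AntitoneOn (fun x => D x ^ 2) (Ici 2) := by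
    apply antitoneOn_of_deriv_nonpos (convex_Ici _)
    · exact fun x hx => (d4 x).continuousAt.continuousWithinAt
    · exact fun x hx => (d4 x).differentiableAt.differentiableWithinAt
    · intro x hx
      have hx : 2 ≤ x := interior_subset hx
      rw [(d4 x).deriv]
      have := P1 x hx
      exact mul_nonpos_of_nonneg_of_nonpos (by linarith) (neg x hx)
  constructor
  · intro x hx
    have := anti3 (a := 2) (by simp) hx hx
    simp only at this
    linarith
  · intro x y hx hy
    exact anti4 hx (le_trans hx hy) hy

set_option maxHeartbeats 4000000 in
theorem core_all : ∃ C : ℝ, 1 ≤ C ∧ ∀ (h : ℝ) (f D : ℝ → ℝ), 0 < h → h ≤ 1 →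
    (∀ x, HasDerivAt f (D x) x) →
    (∀ x, HasDerivAt D ((x + h^2*x^2/4 - h/2) * f x) x) →
    Tendsto (fun x => f x * D x) atTop (nhds 0) →
    Tendsto (fun x => D x ^ 2 - (x + h^2*x^2/4 - h/2) * f x ^ 2) atTop (nhds 0) →
    f (-(2/h^2)) ^ 2 ≤ h → D (-(2/h^2)) ^ 2 ≤ 1/h →
    ∀ x a : ℝ, -(2/h^2) ≤ x → 0 ≤ a → a^4 = |x| →
      |f x| ≤ C ∧ |f x| * a ≤ C ∧ |D x| ≤ C * (1 + a) ∧
      |(x + h^2*x^2/4 - h/2) * f x| ≤ C * (1 + a^3) ∧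
      h * a^4 * |f x| ≤ C * a ∧ h * a^4 * |D x| ≤ C * (1 + a^3) := by
  obtain ⟨B, hB⟩ : ∃ B : ℝ, B = 80 * Real.exp 50 := ⟨_, rfl⟩
  have B1 : 80 ≤ B := by
    have := Real.add_one_le_exp 50
    rw [hB]; linarith
  refine ⟨8 * B, by linarith, ?_⟩
  intro h f D h0 h1 hf hD t1 t2 i0 i1
  have lower : ∀ x a : ℝ, -(2/h^2) ≤ x → x ≤ -2 → 0 ≤ a → a^4 = |x| →
      1 ≤ a ∧ |f x| * a ≤ 4 ∧ |D x| ≤ 4 * a ∧ |x + h^2*x^2/4 - h/2| ≤ 2 * a^4 ∧ h * a^2 ≤ 2 := by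
    intro x a hx hx2 ha hax
    have E := core_lower h h0 h1 f D hf hD i0 i1 x hx hx2
    rw [abs_of_nonpos (by linarith)] at hax
    have a1 : 1 ≤ a := by
      by_contra hc
      push Not at hc
      have := pow_le_one₀ (n := 4) ha hc.le
      linarith
    have hh : -2 ≤ h^2 * x := by
      have := mul_le_mul_of_nonneg_left hx (sq_nonneg h)
      have e : h^2 * -(2/h^2) = -2 := by field_simp
      linarith
    set q := h/2 - x - h^2*x^2/4 with hq
    have q1 : a^4/2 ≤ q := by rw [hq, hax]; nlinarith
    have q2 : q ≤ 2*a^4 := by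
      have : 0 ≤ h^2*x^2 := by positivity
      rw [hq, hax]; linarith
    have a4 : 0 ≤ a^4 := by positivity
    have r1 : a^2/2 ≤ Real.sqrt q := by
      apply Real.le_sqrt_of_sq_le
      have : (a^2/2)^2 = a^4/4 := by ring
      rw [this]; linarith
    have r2 : Real.sqrt q ≤ 2 * a^2 := by
      rw [Real.sqrt_le_left (by positivity)]
      have : (2 * a^2)^2 = 4*a^4 := by ring
      rw [this]; linarith
    have rp : 0 < Real.sqrt q := lt_of_lt_of_le (by positivity) r1
    have e1 : Real.sqrt q * f x ^ 2 ≤ 8 := by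
      have : 0 ≤ D x ^ 2 / Real.sqrt q := by positivity
      linarith
    have e2 : D x ^ 2 / Real.sqrt q ≤ 8 := by
      have : 0 ≤ Real.sqrt q * f x ^ 2 := by positivity
      linarith
    rw [div_le_iff₀ rp] at e2
    refine ⟨a1, ?_, ?_, ?_, ?_⟩
    · apply le_of_sq_le_sq _ (by norm_num)
      rw [mul_pow, sq_abs]
      have := mul_le_mul_of_nonneg_right r1 (sq_nonneg (f x))
      linarith
    · apply le_of_sq_le_sq _ (by positivity)
      rw [sq_abs]
      linarith [mul_pow 4 a 2]
    · have : x + h^2*x^2/4 - h/2 = -q := by rw [hq]; ring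
      rw [this, abs_neg, abs_of_nonneg (by linarith)]
      exact q2
    · apply le_of_sq_le_sq _ (by norm_num)
      have : (h * a^2)^2 = h^2 * a^4 := by ring
      rw [this, hax]; linarith
  have hm2 : -(2/h^2) ≤ -2 := by
    have : 1 ≤ 1/h^2 := by rw [le_div_iff₀ (by positivity)]; nlinarith
    have e : 2/h^2 = 2 * (1/h^2) := by ring
    rw [e]; linarith
  have M2 : f (-2) ^ 2 + D (-2) ^ 2 ≤ 80 := by
    obtain ⟨b1, b2, b3, -, -⟩ := lower (-2) ((2:ℝ)^((1:ℝ)/4)) hm2 le_rfl (by positivity) (by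
      rw [← Real.rpow_natCast, ← Real.rpow_mul (by norm_num)]; norm_num)
    have ha : (2:ℝ)^((1:ℝ)/4) ≤ 2 := by
      conv_rhs => rw [← Real.rpow_one 2]
      exact Real.rpow_le_rpow_of_exponent_le (by norm_num) (by norm_num)
    have c1 : |f (-2)| ≤ 4 := by nlinarith [abs_nonneg (f (-2))]
    have c2 : |D (-2)| ≤ 8 := by linarith
    rw [← sq_abs (f (-2)), ← sq_abs (D (-2))]
    nlinarith [abs_nonneg (f (-2)), abs_nonneg (D (-2))]
  have mid : ∀ x, -2 ≤ x → x ≤ 3 → |f x| ≤ B ∧ |D x| ≤ B := by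
    intro x hx hx2
    have := core_mid h h0 h1 f D hf hD x hx hx2
    have h3 : (f (-2) ^ 2 + D (-2) ^ 2) * Real.exp 50 ≤ B := by rw [hB]; gcongr
    have h4 : B ≤ B^2 := by nlinarith
    constructor <;> apply le_of_sq_le_sq _ (by linarith) <;> rw [sq_abs] <;> nlinarith
  obtain ⟨u1, u2⟩ := core_upper h h0 h1 f D hf hD t1 t2
  have up : ∀ x, 2 ≤ x → x^2 * |f x| ≤ 4 * B := by
    intro x hx
    have a1 := u1 x hx
    have a2 := (mid 2 (by norm_num) (by norm_num)).1
    apply le_of_sq_le_sq _ (by linarith)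
    have : (x^2*|f x|)^2 = (x^2 * f x)^2 := by rw [mul_pow, sq_abs, mul_pow]
    rw [this]
    have : f 2 ^ 2 ≤ B ^ 2 := by rw [← sq_abs]; exact pow_le_pow_left₀ (abs_nonneg _) a2 2
    nlinarith
  intro x a hx ha hax
  rcases le_or_gt x (-2) with c | c
  · obtain ⟨b1, b2, b3, b4, b5⟩ := lower x a hx c ha hax
    have f4 : |f x| ≤ 4 := by nlinarith [abs_nonneg (f x)]
    have a3 : 1 ≤ a^3 := one_le_pow₀ b1
    refine ⟨by linarith, by linarith, by nlinarith, ?_, ?_, ?_⟩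
    · rw [abs_mul]
      calc _ ≤ 2 * a^4 * |f x| := by gcongr
        _ = 2 * a^3 * (|f x| * a) := by ring
        _ ≤ 2 * a^3 * 4 := by gcongr
        _ ≤ _ := by nlinarith
    · calc h * a^4 * |f x| = (h * a^2) * a * (|f x| * a) := by ring
        _ ≤ 2 * a * 4 := by gcongr
        _ ≤ _ := by nlinarith
    · calc h * a^4 * |D x| = (h * a^2) * a^2 * |D x| := by ring
        _ ≤ 2 * a^2 * (4 * a) := by gcongr
        _ = 8 * a^3 := by ring
        _ ≤ _ := by nlinarith
  rcases le_or_gt x 3 with c3 | c3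
  · obtain ⟨m1, m2⟩ := mid x c.le c3
    have ax : a^4 ≤ 3 := by rw [hax, abs_le]; constructor <;> linarith
    have a2 : a ≤ 2 := by
      by_contra hc
      push Not at hc
      have := pow_le_pow_left₀ (by norm_num) hc.le 4
      norm_num at this
      linarith
    have a3 : 0 ≤ a^3 := by positivity
    have fp := abs_nonneg (f x)
    have dp := abs_nonneg (D x)
    have ha1 : h * a^4 ≤ 3 := by nlinarith
    refine ⟨by linarith, by nlinarith, by nlinarith, ?_, ?_, ?_⟩
    · rw [abs_mul]
      have hh : h^2 * x^2 ≤ 1 * 9 := mul_le_mul (by nlinarith) (by nlinarith) (sq_nonneg _) (by norm_num)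
      have hh0 : 0 ≤ h^2 * x^2 := by positivity
      have hP : |x + h^2*x^2/4 - h/2| ≤ 8 := by rw [abs_le]; constructor <;> linarith
      calc _ ≤ 8 * B := by gcongr
        _ ≤ _ := by nlinarith
    · have a38 : a^3 ≤ 8 := by
        have := pow_le_pow_left₀ ha a2 3
        linarith
      calc h * a^4 * |f x| = h * (a^3) * a * |f x| := by ring
        _ ≤ 1 * 8 * a * B := by gcongr
        _ = _ := by ring
    · calc h * a^4 * |D x| ≤ 3 * B := by gcongr
        _ ≤ _ := by nlinarith
  · have ux := up x (by linarith)
    have ux1 := up (x-1) (by linarith)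
    rw [abs_of_nonneg (by linarith : 0 ≤ x)] at hax
    have a1 : 1 ≤ a := by
      by_contra hc
      push Not at hc
      have := pow_le_one₀ (n := 4) ha hc.le
      linarith
    have a3 : 1 ≤ a^3 := one_le_pow₀ a1
    have aax : a ≤ x := by rw [← hax]; nlinarith
    have fp := abs_nonneg (f x)
    have dp := abs_nonneg (D x)
    have xd : x * |D x| ≤ 8 * B := by
      obtain ⟨ξ, ⟨k1, k2⟩, k3⟩ := exists_hasDerivAt_eq_slope f D (by linarith : x - 1 < x)
        (fun y hy => (hf y).continuousAt.continuousWithinAt) (fun y hy => hf y)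
      have k4 := u2 ξ x (by linarith) k2.le
      rw [sq_le_sq] at k4
      have k5 : |D ξ| ≤ |f x| + |f (x-1)| := by
        rw [k3]; simp only [sub_sub_cancel, div_one]; exact abs_sub _ _
      have k6 : x * |f x| ≤ x^2 * |f x| := by gcongr; nlinarith
      have k7 : x * |f (x-1)| ≤ (x-1)^2 * |f (x-1)| := by gcongr; nlinarith
      have k8 : x * |D x| ≤ x * (|f x| + |f (x-1)|) := by gcongr; linarith
      linarith
    have xf : x * |f x| ≤ 4 * B := by nlinarith
    refine ⟨by nlinarith, by nlinarith, by nlinarith, ?_, ?_, ?_⟩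
    · rw [abs_mul]
      have hh : h^2 * x^2 ≤ 1 * x^2 := by gcongr; nlinarith
      have hh0 : 0 ≤ h^2 * x^2 := by positivity
      have hP : |x + h^2*x^2/4 - h/2| ≤ x^2 := by rw [abs_le]; constructor <;> nlinarith
      calc _ ≤ x^2 * |f x| := by gcongr
        _ ≤ _ := by nlinarith
    · rw [hax, mul_assoc]
      calc h * (x * |f x|) ≤ 1 * (4 * B) := by gcongr
        _ ≤ _ := by nlinarith
    · rw [hax, mul_assoc]
      calc h * (x * |D x|) ≤ 1 * (8 * B) := by gcongr
        _ ≤ _ := by nlinarith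

theorem ker_one (C α β r h fx dx fy dy : ℝ) (hC : 1 ≤ C) (hα : 0 < α) (hβ : 0 < β)
    (hh : 0 < h) (hr0 : r ≤ α^4 + β^4)
    (x1 : |fx| ≤ C) (x2 : |fx| * α ≤ C) (x3 : |dx| ≤ C * (1 + α)) (x5 : h * α^4 * |fx| ≤ C * α)
    (y1 : |fy| ≤ C) (y2 : |fy| * β ≤ C) (y3 : |dy| ≤ C * (1 + β)) (y5 : h * β^4 * |fy| ≤ C * β) :
    |fx * dy - dx * fy| ≤ 2 * C^2 * (α/β + β/α) ∧ h * r * (|fx| * |fy|) ≤ C^2 * (α/β + β/α) := by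
  have Q2 : 2 ≤ α/β + β/α := by
    rw [div_add_div _ _ hβ.ne' hα.ne', le_div_iff₀ (by positivity)]
    nlinarith [sq_nonneg (α - β)]
  have x2' : |fx| ≤ C / α := by rwa [le_div_iff₀ hα]
  have y2' : |fy| ≤ C / β := by rwa [le_div_iff₀ hβ]
  constructor
  · have n1 : |fx| * |dy| ≤ C^2 + C^2 * (β/α) := by
      calc |fx| * |dy| ≤ |fx| * (C * (1 + β)) := by gcongr
        _ = |fx| * C + |fx| * (C * β) := by ring
        _ ≤ C * C + C / α * (C * β) := by gcongr
        _ = _ := by ring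
    have n2 : |dx| * |fy| ≤ C^2 + C^2 * (α/β) := by
      calc |dx| * |fy| ≤ C * (1 + α) * |fy| := by gcongr
        _ = C * |fy| + C * α * |fy| := by ring
        _ ≤ C * C + C * α * (C / β) := by gcongr
        _ = _ := by ring
    calc |fx * dy - dx * fy| ≤ |fx * dy| + |dx * fy| := abs_sub _ _
      _ = |fx| * |dy| + |dx| * |fy| := by rw [abs_mul, abs_mul]
      _ ≤ _ := by nlinarith
  · calc h * r * (|fx| * |fy|) ≤ h * (α^4 + β^4) * (|fx| * |fy|) := by gcongr
      _ = (h * α^4 * |fx|) * |fy| + (h * β^4 * |fy|) * |fx| := by ring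
      _ ≤ (C * α) * (C / β) + (C * β) * (C / α) := by gcongr
      _ = _ := by ring

set_option maxHeartbeats 4000000 in
theorem ker_two (C α β r h fx dx dy ey : ℝ) (hC : 1 ≤ C) (hα : 0 < α) (hβ : 0 < β)
    (hr : 0 < r) (hh : 0 < h) (hr0 : r ≤ α^4 + β^4)
    (x1 : |fx| ≤ C) (x2 : |fx| * α ≤ C) (x3 : |dx| ≤ C * (1 + α)) (x5 : h * α^4 * |fx| ≤ C * α)
    (y3 : |dy| ≤ C * (1 + β)) (y4 : |ey| ≤ C * (1 + β^3)) (y6 : h * β^4 * |dy| ≤ C * (1 + β^3)) :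
    |fx * ey - dx * dy| ≤ 6 * C^2 * ((α/β + β/α)/r + (α^3/β + β^3/α)) ∧
    h * r * (|fx| * |dy|) ≤ 6 * C^2 * ((α/β + β/α)/r + (α^3/β + β^3/α)) := by
  have Q2 : 2 ≤ α/β + β/α := by
    rw [div_add_div _ _ hβ.ne' hα.ne', le_div_iff₀ (by positivity)]
    nlinarith [sq_nonneg (α - β)]
  have x2' : |fx| ≤ C / α := by rwa [le_div_iff₀ hα]
  set R := α^3/β + β^3/α with hR
  have R0 : 0 < R := by positivity
  have Re : R * (α * β) = α^4 + β^4 := by rw [hR]; field_simp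
  have p1 : 0 < α * β := by positivity
  have p2 : (α*β)^2 ≤ α^4 + β^4 := by nlinarith [sq_nonneg (α^2 - β^2)]
  have R1 : α^2 + β^2 ≤ 2 * R := by
    have : (α^2+β^2) * (α * β) ≤ 2 * R * (α * β) := by
      rw [mul_assoc, Re]
      nlinarith [sq_nonneg (α^2 - β^2), sq_nonneg (α - β), sq_nonneg (α^2+β^2)]
    exact le_of_mul_le_mul_right this p1
  have R2 : r ≤ R^2 := by
    have : (α^4+β^4) * (α*β)^2 ≤ R^2 * (α*β)^2 := by
      rw [← mul_pow, Re, sq (α^4+β^4)]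
      gcongr
    have := le_of_mul_le_mul_right this (by positivity)
    linarith
  have S1 : 1 ≤ (α/β + β/α)/r + R := by
    rcases le_or_gt r 2 with c | c
    · have : 1 ≤ (α/β + β/α)/r := by rw [le_div_iff₀ hr]; linarith
      linarith
    · have : 0 ≤ (α/β + β/α)/r := by positivity
      nlinarith
  have Qp : 0 ≤ (α/β + β/α)/r := by positivity
  have ab : (1 + α) * (1 + β) ≤ 2 + 2 * R := by nlinarith [sq_nonneg (α - β), sq_nonneg (α - 1), sq_nonneg (β - 1)]
  have fe : |fx| * (C * (1 + β^3)) ≤ C^2 * (1 + R) := by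
    calc |fx| * (C * (1 + β^3)) = |fx| * C + |fx| * (C * β^3) := by ring
        _ ≤ C * C + C / α * (C * β^3) := by gcongr
        _ = C^2 * (1 + β^3/α) := by ring
        _ ≤ _ := by
          have : 0 ≤ α^3/β := by positivity
          gcongr; rw [hR]; linarith
  have C2 : 0 < C^2 := by positivity
  constructor
  · have n1 : |fx| * |ey| ≤ C^2 * (1 + R) := le_trans (by gcongr) fe
    have n2 : |dx| * |dy| ≤ C^2 * (2 + 2 * R) := by
      calc |dx| * |dy| ≤ (C * (1 + α)) * (C * (1 + β)) := by gcongr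
        _ = C^2 * ((1+α)*(1+β)) := by ring
        _ ≤ _ := by gcongr
    calc |fx * ey - dx * dy| ≤ |fx * ey| + |dx * dy| := abs_sub _ _
      _ = |fx| * |ey| + |dx| * |dy| := by rw [abs_mul, abs_mul]
      _ ≤ C^2 * (1 + R) + C^2 * (2 + 2 * R) := by gcongr
      _ ≤ _ := by nlinarith
  · calc h * r * (|fx| * |dy|) ≤ h * (α^4 + β^4) * (|fx| * |dy|) := by gcongr
      _ = (h * α^4 * |fx|) * |dy| + |fx| * (h * β^4 * |dy|) := by ring
      _ ≤ (C * α) * (C * (1 + β)) + |fx| * (C * (1 + β^3)) := by gcongr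
      _ ≤ C^2 * ((1+α)*(1+β)) + C^2 * (1 + R) := by nlinarith
      _ ≤ C^2 * (2 + 2 * R) + C^2 * (1 + R) := by gcongr
      _ ≤ _ := by nlinarith

open scoped Polynomial
open Polynomial (X)

theorem hermite_deriv (n : ℕ) :
    Polynomial.derivative (Polynomial.hermite (n+1)) = ((n:ℤ[X])+1) * Polynomial.hermite n := by
  induction n with
  | zero => simp
  | succ n ih =>
    rw [Polynomial.hermite_succ (n+1), Polynomial.derivative_sub, Polynomial.derivative_mul, ih,
      Polynomial.derivative_mul]
    have e : Polynomial.derivative ((n:ℤ[X]) + 1) = 0 := by simp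
    have := Polynomial.hermite_succ n
    rw [e, Polynomial.derivative_X]
    push_cast
    linear_combination (-(n:ℤ[X]) - 1) * this

/-- real evaluation of Hermite -/
noncomputable def Hr (n : ℕ) : ℝ[X] := (Polynomial.hermite n).map (Int.castRingHom ℝ)

theorem hermiteP_eq (m : ℕ) (x : ℝ) : hermiteP m x = (Hr m).eval x := by
  unfold hermiteP Hr
  have h := Polynomial.hermite_eq_deriv_gaussian' m x
  rw [Polynomial.aeval_def, Polynomial.eval₂_eq_eval_map] at h
  rw [iteratedDeriv_eq_iterate]
  have e : (fun t : ℝ => Real.exp (-t ^ 2 / 2)) = fun y => Real.exp (-(y^2/2)) := by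
    funext t; congr 1; ring
  rw [e]
  have e2 : (algebraMap ℤ ℝ) = Int.castRingHom ℝ := rfl
  rw [e2] at h
  rw [h]; ring

theorem Hr_zero : Hr 0 = 1 := by simp [Hr]
theorem Hr_succ (n : ℕ) : Hr (n+1) = X * Hr n - Polynomial.derivative (Hr n) := by
  simp [Hr, Polynomial.hermite_succ, Polynomial.derivative_map]
theorem Hr_deriv (n : ℕ) : Polynomial.derivative (Hr (n+1)) = ((n:ℝ[X])+1) * Hr n := by
  unfold Hr
  rw [Polynomial.derivative_map, hermite_deriv]
  simp
theorem Hr_ode (n : ℕ) : Polynomial.derivative (Polynomial.derivative (Hr n)) =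
    X * Polynomial.derivative (Hr n) - (n:ℝ[X]) * Hr n := by
  have h1 := congrArg Polynomial.derivative (Hr_succ n)
  rw [Hr_deriv, Polynomial.derivative_sub, Polynomial.derivative_mul, Polynomial.derivative_X] at h1
  linear_combination h1

/-- polynomial times Gaussian -/
noncomputable def wP (p : ℝ[X]) (t : ℝ) : ℝ := p.eval t * Real.exp (-t^2/4)

theorem wP_deriv (p : ℝ[X]) (t : ℝ) :
    HasDerivAt (wP p) (wP (Polynomial.derivative p) t - t/2 * wP p t) t := by
  have h1 : HasDerivAt (fun t : ℝ => Real.exp (-t^2/4)) (Real.exp (-t^2/4) * (-t/2)) t := by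
    refine HasDerivAt.congr_deriv ((((hasDerivAt_id t).pow 2).neg.div_const 4).exp) ?_
    simp; ring
  refine HasDerivAt.congr_deriv ((p.hasDerivAt t).mul h1) ?_
  simp only [wP]; ring

theorem wP_tendsto (p : ℝ[X]) : Tendsto (wP p) atTop (nhds 0) := by
  have h := ((Polynomial.tendsto_div_exp_atTop p).abs.const_mul (Real.exp 1))
  simp only [abs_zero, mul_zero] at h
  apply squeeze_zero_norm _ h
  intro t
  rw [wP, Real.norm_eq_abs, abs_mul, abs_div, Real.abs_exp, Real.abs_exp]
  have : Real.exp (-t^2/4) ≤ Real.exp 1 * Real.exp (-t) := by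
    rw [← Real.exp_add]; apply Real.exp_le_exp.2; nlinarith [sq_nonneg (t - 2)]
  calc _ ≤ |p.eval t| * (Real.exp 1 * Real.exp (-t)) := by gcongr
    _ = _ := by rw [Real.exp_neg]; ring

/-- normalization constant -/
noncomputable def cN (m : ℕ) : ℝ := (2 * Real.pi) ^ (-(1:ℝ)/4) * ((m.factorial : ℝ)) ^ (-(1:ℝ)/2)

theorem osc_eq (m : ℕ) (x : ℝ) : osc m x = cN m * wP (Hr m) x := by
  rw [osc, hermiteP_eq, cN, wP]; ring

/-- derivative of osc -/
noncomputable def oscD (m : ℕ) (x : ℝ) : ℝ :=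
  cN m * (wP (Polynomial.derivative (Hr m)) x - x/2 * wP (Hr m) x)

theorem osc_deriv (m : ℕ) (x : ℝ) : HasDerivAt (osc m) (oscD m x) x := by
  have : osc m = fun x => cN m * wP (Hr m) x := funext (osc_eq m)
  rw [this]
  exact (wP_deriv _ x).const_mul _

theorem oscD_deriv (m : ℕ) (x : ℝ) : HasDerivAt (oscD m) ((x^2/4 - m - 1/2) * osc m x) x := by
  have h2 : HasDerivAt (fun x : ℝ => x/2) (1/2) x := (hasDerivAt_id x).div_const 2
  refine HasDerivAt.congr_deriv
    (((wP_deriv (Polynomial.derivative (Hr m)) x).sub (h2.mul (wP_deriv (Hr m) x))).const_mul (cN m)) ?_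
  rw [osc_eq, Hr_ode]
  simp only [wP, Polynomial.eval_sub, Polynomial.eval_mul, Polynomial.eval_X, Polynomial.eval_natCast]
  ring

theorem cN_sq (m : ℕ) : (cN m)^2 = (2 * Real.pi) ^ (-(1:ℝ)/2) / (m.factorial : ℝ) := by
  have hp : 0 < 2 * Real.pi := by positivity
  have hm : (0:ℝ) < m.factorial := by positivity
  rw [cN, mul_pow, ← Real.rpow_natCast, ← Real.rpow_natCast, ← Real.rpow_mul hp.le,
    ← Real.rpow_mul hm.le]
  have e1 : (-(1:ℝ)/4) * ((2:ℕ):ℝ) = -(1:ℝ)/2 := by norm_num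
  have e2 : (-(1:ℝ)/2) * ((2:ℕ):ℝ) = -1 := by norm_num
  rw [e1, e2, Real.rpow_neg_one, div_eq_mul_inv ((2 * Real.pi) ^ (-(1:ℝ)/2))]

theorem Hr_eval_zero (n : ℕ) : (Hr (n+2)).eval 0 = -((n:ℝ)+1) * (Hr n).eval 0 := by
  rw [Hr_succ, Hr_deriv]; simp; ring

theorem osc_sq_zero_rec (n : ℕ) : ((n:ℝ)+2) * osc (n+2) 0 ^ 2 = ((n:ℝ)+1) * osc n 0 ^ 2 := by
  rw [osc_eq, osc_eq, mul_pow, mul_pow, cN_sq, cN_sq, wP, wP, Hr_eval_zero, Nat.factorial_succ, Nat.factorial_succ]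
  have hm : (0:ℝ) < n.factorial := by positivity
  push_cast
  field_simp
  ring

theorem osc_zero_bound (n : ℕ) : (osc n 0 ^ 2)^2 * ((n:ℝ)+1) ≤ 1 := by
  induction n using Nat.twoStepInduction with
  | zero =>
    rw [osc_eq, mul_pow, cN_sq, wP, Hr_zero]
    simp only [Polynomial.eval_one, Nat.factorial_zero, Nat.cast_one, Nat.cast_zero, div_one, zero_add,
      mul_one, one_mul, ne_eq, OfNat.ofNat_ne_zero, not_false_eq_true, zero_pow, neg_zero, zero_div,
      Real.exp_zero, one_pow]
    rw [← Real.rpow_natCast, ← Real.rpow_mul (by positivity)]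
    apply Real.rpow_le_one_of_one_le_of_nonpos
    · linarith [Real.pi_gt_three]
    · norm_num
  | one =>
    rw [osc_eq, wP, Hr_succ, Hr_zero]; simp
  | more n ih _ =>
    have h := osc_sq_zero_rec n
    have e : osc (n+2) 0 ^ 2 = ((n:ℝ)+1) / (n+2) * osc n 0 ^ 2 := by
      field_simp; linarith
    rw [e]
    push_cast
    have : (((n:ℝ)+1) / (n+2) * osc n 0 ^ 2)^2 * ((n:ℝ) + 2 + 1)
       = ((osc n 0 ^ 2)^2 * (n+1)) * (((n:ℝ)+1) * (n+3) / (n+2)^2) := by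
      field_simp; ring
    rw [this]
    have h3 : ((n:ℝ)+1) * (n+3) / (n+2)^2 ≤ 1 := by
      rw [div_le_one (by positivity)]; nlinarith
    calc _ ≤ 1 * (1:ℝ) := by gcongr
      _ = 1 := by norm_num

theorem oscD_zero (n : ℕ) : oscD (n+1) 0 ^ 2 = ((n:ℝ)+1) * osc n 0 ^ 2 := by
  rw [oscD, osc_eq, Hr_deriv, mul_pow, mul_pow, cN_sq, cN_sq, Nat.factorial_succ]
  have hm : (0:ℝ) < n.factorial := by positivity
  simp [wP]
  field_simp

theorem cwP_tendsto (c : ℝ) (p : ℝ[X]) : Tendsto (fun x => c * wP p x) atTop (nhds 0) := by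
  have := (wP_tendsto p).const_mul c
  rwa [mul_zero] at this

theorem osc_tendsto (m : ℕ) : Tendsto (osc m) atTop (nhds 0) := by
  have : osc m = fun x => cN m * wP (Hr m) x := funext (osc_eq m)
  rw [this]
  exact cwP_tendsto _ _

theorem oscD_tendsto (m : ℕ) : Tendsto (oscD m) atTop (nhds 0) := by
  have : oscD m = fun x => cN m *
      wP (Polynomial.derivative (Hr m) - Polynomial.C (1/2) * X * Hr m) x := by
    funext x; simp only [oscD, wP, Polynomial.eval_sub, Polynomial.eval_mul, Polynomial.eval_C, Polynomial.eval_X]; ring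
  rw [this]
  exact cwP_tendsto _ _

theorem oscDD_tendsto (m : ℕ) :
    Tendsto (fun x => (x^2/4 - m - 1/2) * osc m x) atTop (nhds 0) := by
  have : (fun x => (x^2/4 - m - 1/2) * osc m x) = fun x => cN m *
      wP ((Polynomial.C (1/4) * X^2 - (m:ℝ[X]) - Polynomial.C (1/2)) * Hr m) x := by
    funext x; simp [osc_eq, wP]; ring
  rw [this]
  exact cwP_tendsto _ _

theorem psi_setup (n : ℕ) (hn : 1 ≤ n) : ∃ (h : ℝ) (D : ℝ → ℝ), 0 < h ∧ h ≤ 1 ∧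
    1 / (n:ℝ)^((1:ℝ)/3) = h ∧ 2 * (n:ℝ)^((2:ℝ)/3) = 2/h^2 ∧
    (∀ x, HasDerivAt (psiN n) (D x) x) ∧
    (∀ x, HasDerivAt D ((x + h^2*x^2/4 - h/2) * psiN n x) x) ∧
    Tendsto (fun x => psiN n x * D x) atTop (nhds 0) ∧
    Tendsto (fun x => D x ^ 2 - (x + h^2*x^2/4 - h/2) * psiN n x ^ 2) atTop (nhds 0) ∧
    psiN n (-(2/h^2)) ^ 2 ≤ h ∧ D (-(2/h^2)) ^ 2 ≤ 1/h := by
  have n1 : (1:ℝ) ≤ n := by exact_mod_cast hn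
  have n0 : (0:ℝ) ≤ n := by linarith
  obtain ⟨z, hz⟩ : ∃ z : ℝ, z = (n:ℝ)^((1:ℝ)/12) := ⟨_, rfl⟩
  have z1 : 1 ≤ z := by rw [hz]; exact Real.one_le_rpow n1 (by norm_num)
  have z0 : 0 < z := by linarith
  have zp : ∀ k : ℕ, z ^ k = (n:ℝ)^((k:ℝ)/12) := by
    intro k; rw [hz, ← Real.rpow_natCast, ← Real.rpow_mul n0]; congr 1; ring
  have e13 : (n:ℝ)^((1:ℝ)/3) = z^4 := by rw [zp]; norm_num
  have e23 : (n:ℝ)^((2:ℝ)/3) = z^8 := by rw [zp]; norm_num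
  have e16 : (n:ℝ)^(-(1:ℝ)/6) = (z^2)⁻¹ := by rw [zp, ← Real.rpow_neg n0]; norm_num
  have es : Real.sqrt n = z^6 := by rw [zp, Real.sqrt_eq_rpow]; norm_num
  have en : (n:ℝ) = z^12 := by rw [zp]; norm_num
  have ef : ∀ x, psiN n x = z * osc n (2 * z^6 + (z^2)⁻¹ * x) := by
    intro x; rw [psiN, psiUp, ← hz, es, e16]
  have aff : ∀ x, HasDerivAt (fun x => 2 * z^6 + (z^2)⁻¹ * x) ((z^2)⁻¹) x := by
    intro x
    refine HasDerivAt.congr_deriv (((hasDerivAt_id x).const_mul ((z^2)⁻¹)).const_add (2 * z^6)) ?_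
    simp
  have at0 : 2 * z^6 + (z^2)⁻¹ * (-(2/((z^4)⁻¹)^2)) = 0 := by field_simp; ring
  have affT : Tendsto (fun x => 2 * z^6 + (z^2)⁻¹ * x) atTop atTop :=
    tendsto_atTop_add_const_left _ _ (tendsto_id.const_mul_atTop (by positivity))
  have T0 : Tendsto (psiN n) atTop (nhds 0) := by
    have : psiN n = fun x => z * osc n (2 * z^6 + (z^2)⁻¹ * x) := funext ef
    rw [this]
    simpa using ((osc_tendsto n).comp affT).const_mul z
  have T1 : Tendsto (fun x => z⁻¹ * oscD n (2 * z^6 + (z^2)⁻¹ * x)) atTop (nhds 0) := by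
    simpa using ((oscD_tendsto n).comp affT).const_mul z⁻¹
  have DD : ∀ x, (x + ((z^4)⁻¹)^2*x^2/4 - (z^4)⁻¹/2) * psiN n x =
      (z^3)⁻¹ * (((2 * z^6 + (z^2)⁻¹ * x)^2/4 - n - 1/2) * osc n (2 * z^6 + (z^2)⁻¹ * x)) := by
    intro x
    rw [ef, en]
    field_simp
    ring
  have T2 : Tendsto (fun x => (x + ((z^4)⁻¹)^2*x^2/4 - (z^4)⁻¹/2) * psiN n x) atTop (nhds 0) := by
    simp_rw [DD]
    simpa using ((oscDD_tendsto n).comp affT).const_mul (z^3)⁻¹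
  refine ⟨(z^4)⁻¹, fun x => z⁻¹ * oscD n (2 * z^6 + (z^2)⁻¹ * x), by positivity, ?_, ?_, ?_, ?_, ?_, ?_, ?_, ?_, ?_⟩
  · exact inv_le_one_of_one_le₀ (one_le_pow₀ z1)
  · rw [e13]; simp
  · rw [e23]; field_simp
  · intro x
    have : psiN n = fun x => z * osc n (2 * z^6 + (z^2)⁻¹ * x) := funext ef
    rw [this]
    refine HasDerivAt.congr_deriv (((osc_deriv n _).comp x (aff x)).const_mul z) ?_
    field_simp
  · intro x
    refine HasDerivAt.congr_deriv (((oscD_deriv n _).comp x (aff x)).const_mul z⁻¹) ?_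
    rw [DD]
    field_simp
  · simpa using T0.mul T1
  · have := (T1.pow 2).sub (T2.mul T0)
    simp only [ne_eq, OfNat.ofNat_ne_zero, not_false_eq_true, zero_pow, mul_zero, sub_zero] at this
    refine this.congr ?_
    intro x; ring
  · rw [ef, at0, mul_pow]
    have b := osc_zero_bound n
    have hb : osc n 0 ^ 2 * z^6 ≤ 1 := by
      apply le_of_sq_le_sq _ (by norm_num)
      calc (osc n 0 ^ 2 * z^6)^2 = (osc n 0 ^ 2)^2 * z^12 := by ring
        _ ≤ (osc n 0 ^ 2)^2 * ((n:ℝ) + 1) := by rw [en]; gcongr; linarith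
        _ ≤ 1^2 := by linarith
    rw [inv_eq_one_div, le_div_iff₀ (by positivity)]
    linarith
  · simp only
    rw [at0, mul_pow]
    obtain ⟨m, rfl⟩ : ∃ m, n = m + 1 := ⟨n - 1, by omega⟩
    rw [oscD_zero]
    have en' : (m:ℝ) + 1 = z^12 := by rw [← en]; push_cast; ring
    have b := osc_zero_bound m
    rw [en'] at b ⊢
    have hb : osc m 0 ^ 2 * z^6 ≤ 1 := by
      apply le_of_sq_le_sq _ (by norm_num)
      calc (osc m 0 ^ 2 * z^6)^2 = (osc m 0 ^ 2)^2 * z^12 := by ring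
        _ ≤ 1^2 := by linarith
    have e : z⁻¹^2 * (z^12 * osc m 0 ^ 2) = z^4 * (osc m 0 ^ 2 * z^6) := by field_simp
    rw [e]
    have : 1 / (z^4)⁻¹ = z^4 := by simp
    rw [this]
    nlinarith [pow_pos z0 4]

set_option maxHeartbeats 4000000 in
/-- uniform bounds on the finite-`n` Airy kernel and its `y`-derivative. -/
theorem KAiN_bounds :
    ∃ C : ℝ, 0 < C ∧ ∀ n : ℕ, 1 ≤ n → ∀ x y : ℝ,
      -(2 * (n : ℝ) ^ ((2:ℝ)/3)) ≤ x → -(2 * (n : ℝ) ^ ((2:ℝ)/3)) ≤ y →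
      x ≠ y → x ≠ 0 → y ≠ 0 →
      |KAiN n x y| ≤ C * Ghat (-(1:ℝ)/4) ((1:ℝ)/4) 1 x y ∧
      |deriv (fun z => KAiN n x z) y| ≤
        C * (Ghat (-(1:ℝ)/4) ((1:ℝ)/4) 2 x y + Ghat (-(3:ℝ)/4) ((1:ℝ)/4) 1 x y) := by
  obtain ⟨C, hC, core⟩ := core_all
  refine ⟨20 * C^2, by positivity, ?_⟩
  intro n hn x y hx hy hxy hx0 hy0
  obtain ⟨h, D, h0, h1, eh, eh2, hf, hD, t1, t2, i0, i1⟩ := psi_setup n hn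
  have bd := core h (psiN n) D h0 h1 hf hD t1 t2 i0 i1
  rw [eh2] at hx hy
  have dpsi : deriv (psiN n) = D := funext fun x => (hf x).deriv
  have hK : ∀ z, z ≠ x → KAiN n x z =
      (psiN n x * D z - D x * psiN n z) / (x - z) - h/2 * (psiN n x * psiN n z) := by
    intro z hz
    have e : 1 / (2 * (n:ℝ)^((1:ℝ)/3)) = h/2 := by rw [← eh]; ring
    rw [KAiN, if_neg hz.symm, dpsi, e]
  clear core t1 t2 i0 i1
  generalize psiN n = f at *
  have ax : 0 < |x| := abs_pos.2 hx0
  have ay : 0 < |y| := abs_pos.2 hy0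
  have ar : 0 < |x - y| := abs_pos.2 (sub_ne_zero.2 hxy)
  obtain ⟨α, hα⟩ : ∃ α : ℝ, α = |x|^((1:ℝ)/4) := ⟨_, rfl⟩
  obtain ⟨β, hβ⟩ : ∃ β : ℝ, β = |y|^((1:ℝ)/4) := ⟨_, rfl⟩
  have α0 : 0 < α := by rw [hα]; positivity
  have β0 : 0 < β := by rw [hβ]; positivity
  have α4 : α^4 = |x| := by rw [hα, ← Real.rpow_natCast, ← Real.rpow_mul ax.le]; norm_num
  have β4 : β^4 = |y| := by rw [hβ, ← Real.rpow_natCast, ← Real.rpow_mul ay.le]; norm_num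
  have α3 : |x|^((3:ℝ)/4) = α^3 := by rw [hα, ← Real.rpow_natCast, ← Real.rpow_mul ax.le]; norm_num
  have β3 : |y|^((3:ℝ)/4) = β^3 := by rw [hβ, ← Real.rpow_natCast, ← Real.rpow_mul ay.le]; norm_num
  have αi : |x|^(-((1:ℝ)/4)) = α⁻¹ := by rw [hα, Real.rpow_neg ax.le]
  have βi : |y|^(-((1:ℝ)/4)) = β⁻¹ := by rw [hβ, Real.rpow_neg ay.le]
  have m1 : -(-(1:ℝ)/4) = 1/4 := by norm_num
  have m3 : -(-(3:ℝ)/4) = 3/4 := by norm_num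
  have G1 : Ghat (-(1:ℝ)/4) ((1:ℝ)/4) 1 x y = (α/β + β/α)/|x-y| := by
    rw [Ghat, Gf, Gf, m1, αi, βi, ← hα, ← hβ, abs_sub_comm y x, Real.rpow_neg_one]
    ring
  have G2 : Ghat (-(1:ℝ)/4) ((1:ℝ)/4) 2 x y = (α/β + β/α)/|x-y|/|x-y| := by
    rw [Ghat, Gf, Gf, m1, αi, βi, ← hα, ← hβ, abs_sub_comm y x, Real.rpow_neg ar.le, Real.rpow_two]
    field_simp
  have G3 : Ghat (-(3:ℝ)/4) ((1:ℝ)/4) 1 x y = (α^3/β + β^3/α)/|x-y| := by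
    rw [Ghat, Gf, Gf, m3, αi, βi, α3, β3, abs_sub_comm y x, Real.rpow_neg_one]
    ring
  rw [G1, G2, G3]
  obtain ⟨x1, x2, x3, x4, x5, x6⟩ := bd x α hx α0.le α4
  obtain ⟨y1, y2, y3, y4, y5, y6⟩ := bd y β hy β0.le β4
  have hr0 : |x - y| ≤ α^4 + β^4 := by rw [α4, β4]; exact abs_sub _ _
  obtain ⟨k1, k2⟩ := ker_one C α β |x-y| h (f x) (D x) (f y) (D y) hC α0 β0 h0 hr0 x1 x2 x3 x5 y1 y2 y3 y5
  obtain ⟨k3, k4⟩ := ker_two C α β |x-y| h (f x) (D x) (D y) _ hC α0 β0 ar h0 hr0 x1 x2 x3 x5 y3 y4 y6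
  have Q0 : 0 ≤ α/β + β/α := by positivity
  have R0 : 0 ≤ α^3/β + β^3/α := by positivity
  have C0 : 0 < C^2 := by positivity
  generalize α/β + β/α = Q at *
  generalize α^3/β + β^3/α = R at *
  have Qr : 0 ≤ Q / |x-y| := by positivity
  constructor
  · rw [hK y hxy.symm]
    calc |(f x * D y - D x * f y) / (x - y) - h / 2 * (f x * f y)|
        ≤ |(f x * D y - D x * f y) / (x - y)| + |h / 2 * (f x * f y)| := abs_sub _ _
      _ = (|f x * D y - D x * f y| + (h * |x-y| * (|f x| * |f y|))/2) / |x - y| := by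
          rw [abs_div, abs_mul, abs_mul, abs_of_pos (by positivity : 0 < h/2)]
          field_simp
      _ ≤ (20 * C^2 * Q) / |x - y| := by
          apply div_le_div_of_nonneg_right _ ar.le
          nlinarith
      _ = _ := by ring
  · have sub0 : x - y ≠ 0 := sub_ne_zero.2 hxy
    have dv : HasDerivAt (fun z => KAiN n x z)
        ((f x * ((y + h^2*y^2/4 - h/2) * f y) - D x * D y) / (x - y)
          + (f x * D y - D x * f y) / (x - y)^2 - h/2 * (f x * D y)) y := by
      have hd : HasDerivAt (fun z => (f x * D z - D x * f z) / (x - z) - h/2 * (f x * f z))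
        ((f x * ((y + h^2*y^2/4 - h/2) * f y) - D x * D y) / (x - y)
          + (f x * D y - D x * f y) / (x - y)^2 - h/2 * (f x * D y)) y := by
        refine HasDerivAt.congr_deriv (((((hD y).const_mul (f x)).sub ((hf y).const_mul (D x))).div
          ((hasDerivAt_id y).const_sub x) sub0).sub (((hf y).const_mul (f x)).const_mul (h/2))) ?_
        simp
        field_simp
        ring
      apply hd.congr_of_eventuallyEq
      filter_upwards [isOpen_ne.mem_nhds hxy.symm] with z hz
      exact hK z hz
    rw [dv.deriv]
    generalize (y + h^2*y^2/4 - h/2) * f y = e at *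
    calc _ ≤ |(f x * e - D x * D y) / (x - y)| + |(f x * D y - D x * f y) / (x - y)^2|
            + |h/2 * (f x * D y)| := by
          refine (abs_sub _ _).trans ?_
          gcongr
          exact abs_add_le _ _
      _ = (|f x * e - D x * D y| + |f x * D y - D x * f y| / |x - y|
            + (h * |x-y| * (|f x| * |D y|))/2) / |x - y| := by
          rw [abs_div, abs_div, abs_pow, abs_mul, abs_mul (f x), abs_of_pos (by positivity : 0 < h/2)]
          field_simp
      _ ≤ (6 * C^2 * (Q/|x-y| + R) + 2 * C^2 * Q / |x-y| + (6 * C^2 * (Q/|x-y| + R))/2) / |x - y| := by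
          gcongr
      _ ≤ (20 * C^2 * (Q/|x-y| + R)) / |x - y| := by
          apply div_le_div_of_nonneg_right _ ar.le
          have e : 2 * C^2 * Q / |x-y| = 2 * C^2 * (Q/|x-y|) := by ring
          rw [e]
          nlinarith [mul_nonneg C0.le Qr, mul_nonneg C0.le R0]
      _ = _ := by ring
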